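/- Let n ≥ 1 and let T be a proper subset of [n]. Let m be the largest integer in [n] not belonging to T, and set E = {1,2,…,m-1} \ T. Then ∑_{π ∈ S_n, T ⊆ FIX(π)} (-1)^{inv(π)} ∏_{j ∈ EXCi(π)} x_j = ∏_{j ∈ E} (1 - x_j), where the empty product has value 1. In particular, setting all variables equal to t, the difference between the excedance generating polynomials of even and odd permutations of [n] fixing every element of T equals (1-t)^{n-1-|T|}. -/

import Mathlib

open Finset MvPolynomial

/-- Number of inversions of a permutation of `Fin n`
(pairs `p.1 < p.2` with `π p.1 > π p.2`). -/
def inversions {n : ℕ} (π : Equiv.Perm (Fin n)) : ℕ :=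
  (Finset.univ.filter fun p : Fin n × Fin n => p.1 < p.2 ∧ π p.2 < π p.1).card

/-- Excedance indices of a permutation. -/
def EXCi {n : ℕ} (π : Equiv.Perm (Fin n)) : Finset (Fin n) :=
  Finset.univ.filter fun i => i < π i

/-- Excedance values of a permutation. -/
def EXCv {n : ℕ} (π : Equiv.Perm (Fin n)) : Finset (Fin n) :=
  (EXCi π).image π

/-- Right-to-left minima indices of a permutation. -/
def RLMi {n : ℕ} (π : Equiv.Perm (Fin n)) : Finset (Fin n) :=
  Finset.univ.filter fun i => ∀ j, i < j → π i < π j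

/-- Right-to-left minima values of a permutation. -/
def RLMv {n : ℕ} (π : Equiv.Perm (Fin n)) : Finset (Fin n) :=
  (RLMi π).image π

/-- The derangements of `Fin n`, i.e. permutations with no fixed point. -/
def derangementsF (n : ℕ) : Finset (Equiv.Perm (Fin n)) :=
  Finset.univ.filter fun π => ∀ i, π i ≠ i

lemma neg_one_pow_inversions {R : Type*} [CommRing R] {n : ℕ} (π : Equiv.Perm (Fin n)) :
    (-1 : R) ^ inversions π = ((Equiv.Perm.sign π : ℤ) : R) := by
  rw [Equiv.Perm.sign_eq_prod_prod_Iio, inversions]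
  have h : (∏ j : Fin n, ∏ i ∈ Finset.Iio j, if π i < π j then (1 : ℤˣ) else -1)
      = (-1) ^ (Finset.univ.filter fun p : Fin n × Fin n => p.1 < p.2 ∧ π p.2 < π p.1).card := by
    rw [← Finset.prod_const, Finset.prod_filter, Fintype.prod_prod_type_right]
    refine Finset.prod_congr rfl fun j _ => ?_
    rw [← Finset.filter_gt_eq_Iio, Finset.prod_filter]
    refine Finset.prod_congr rfl fun i _ => ?_
    by_cases hij : i < j
    · have : π i ≠ π j := fun h => hij.ne (π.injective h)
      by_cases h2 : π i < π j
      · simp [hij, h2, not_lt.2 h2.le]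
      · simp [hij, h2, lt_of_le_of_ne (not_lt.1 h2) this.symm]
    · simp [hij]
  rw [h]
  push_cast
  rfl

/-- The matrix whose determinant is the signed excedance sum. -/
def excMat {R : Type*} [CommRing R] {n : ℕ} (T : Finset (Fin n)) (x : Fin n → R) :
    Matrix (Fin n) (Fin n) R := fun i j =>
  if i ∈ T then (if i = j then 1 else 0) else if i < j then x i else 1

lemma sum_eq_det {R : Type*} [CommRing R] {n : ℕ} (T : Finset (Fin n)) (x : Fin n → R) :
    (∑ π ∈ Finset.univ.filter (fun π : Equiv.Perm (Fin n) => ∀ i ∈ T, π i = i),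
        ((-1 : R) ^ inversions π) * ∏ j ∈ EXCi π, x j) = (excMat T x).det := by
  rw [← Matrix.det_transpose, Matrix.det_apply', Finset.sum_filter]
  refine Finset.sum_congr rfl fun π _ => ?_
  simp only [Matrix.transpose_apply]
  split_ifs with h
  · rw [neg_one_pow_inversions, EXCi, Finset.prod_filter]
    congr 1
    refine Finset.prod_congr rfl fun i _ => ?_
    by_cases hi : i ∈ T
    · simp [excMat, hi, h i hi]
    · simp [excMat, hi]
  · push Not at h
    obtain ⟨i, hi, hne⟩ := h
    rw [Finset.prod_eq_zero (Finset.mem_univ i), mul_zero]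
    simp [excMat, hi, hne.symm]

/-- Reordering of the indices making the reduced matrix triangular. -/
def ordKey {n : ℕ} (m i : Fin n) : ℕ := if i < m then (m : ℕ) - i else i + 1

lemma ordKey_inj {n : ℕ} (m : Fin n) : Function.Injective (ordKey m) := by
  intro i j h
  unfold ordKey at h
  simp only [Fin.lt_def] at h
  apply Fin.ext
  split_ifs at h <;> omega

lemma det_excMat {R : Type*} [CommRing R] {n : ℕ} (T : Finset (Fin n)) (x : Fin n → R)
    (m : Fin n) (hm : m ∉ T) (hmax : ∀ i : Fin n, i ∉ T → i ≤ m) :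
    (excMat T x).det = ∏ j ∈ (Finset.univ.filter (fun j : Fin n => j < m)) \ T, (1 - x j) := by
  let N : Matrix (Fin n) (Fin n) R := fun i j =>
    excMat T x i j + (if j = m then 0 else -1) * excMat T x i m
  have hN : N.det = (excMat T x).det := by
    rw [← Matrix.det_transpose, ← Matrix.det_transpose (excMat T x)]
    exact Matrix.det_eq_of_forall_row_eq_smul_add_const (fun j => if j = m then 0 else -1) m
      (by simp) (fun i j => rfl)
  rw [← hN]
  have htri : ∀ i j, ordKey m j < ordKey m i → N i j = 0 := by
    intro i j h
    have hij : i ≠ j := by rintro rfl; exact lt_irrefl _ h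
    by_cases hi : i ∈ T
    · have : i ≠ m := by rintro rfl; exact hm hi
      simp [N, excMat, hi, hij, this]
    · have him := hmax i hi
      simp only [ordKey, Fin.lt_def] at h
      have hj : j < m ∧ i < j ∨ i = m ∧ j < m := by
        simp only [Fin.lt_def, Fin.ext_iff, Fin.le_def] at *
        split_ifs at h <;> omega
      rcases hj with ⟨h1, h2⟩ | ⟨h1, h2⟩
      · simp [N, excMat, hi, h1.ne, h2, h2.trans h1]
      · subst h1
        simp [N, excMat, hi, h2.ne, not_lt.2 h2.le]
  have hdet : N.det = ∏ i, N i i := by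
    let _ : LinearOrder (Fin n) := LinearOrder.lift' (ordKey m) (ordKey_inj m)
    convert Matrix.det_of_isUpperTriangular (M := N) (fun i j h => htri i j h)
  rw [hdet]
  have hs : (Finset.univ.filter (fun j : Fin n => j < m)) \ T
      = Finset.univ.filter (fun j : Fin n => j < m ∧ j ∉ T) := by
    ext j; simp
  rw [hs, Finset.prod_filter]
  refine Finset.prod_congr rfl fun i _ => ?_
  by_cases hi : i ∈ T
  · have : i ≠ m := by rintro rfl; exact hm hi
    simp [N, excMat, hi, this]
  · rcases (hmax i hi).lt_or_eq with h | h
    · simp [N, excMat, hi, h, h.ne, sub_eq_add_neg]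
    · subst h
      simp [N, excMat, hi]

/-- Here `Fin n` represents `[n]` via `i ↦ i + 1`; `m` is the largest element
of `[n]` not in `T`, and `E = {1,…,m-1} \ T` corresponds to
`(univ.filter (· < m)) \ T`. -/
theorem stmt9 (n : ℕ) (hn : 1 ≤ n) (T : Finset (Fin n)) (hT : T ≠ Finset.univ)
    (m : Fin n) (hm : m ∉ T) (hmax : ∀ i : Fin n, i ∉ T → i ≤ m) :
    ((∑ π ∈ Finset.univ.filter (fun π : Equiv.Perm (Fin n) => ∀ i ∈ T, π i = i),
        ((-1 : MvPolynomial (Fin n) ℤ) ^ inversions π) * ∏ j ∈ EXCi π, X j)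
      = ∏ j ∈ (Finset.univ.filter (fun j : Fin n => j < m)) \ T,
          (1 - (X j : MvPolynomial (Fin n) ℤ)))
    ∧
    ((∑ π ∈ Finset.univ.filter
          (fun π : Equiv.Perm (Fin n) => (∀ i ∈ T, π i = i) ∧ Even (inversions π)),
        (Polynomial.X : Polynomial ℤ) ^ (EXCi π).card)
      - (∑ π ∈ Finset.univ.filter
          (fun π : Equiv.Perm (Fin n) => (∀ i ∈ T, π i = i) ∧ ¬ Even (inversions π)),
          (Polynomial.X : Polynomial ℤ) ^ (EXCi π).card)
      = (1 - Polynomial.X) ^ (n - 1 - T.card)) := by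
  refine ⟨?_, ?_⟩
  · rw [sum_eq_det T (fun j => (X j : MvPolynomial (Fin n) ℤ)), det_excMat T _ m hm hmax]
  · have h := (sum_eq_det T (fun _ => (Polynomial.X : Polynomial ℤ))).trans
      (det_excMat T _ m hm hmax)
    rw [Finset.prod_const] at h
    have hc : ((Finset.univ.filter (fun j : Fin n => j < m)) \ T).card = n - 1 - T.card := by
      have : (Finset.univ.filter (fun j : Fin n => j < m)) \ T = (insert m T)ᶜ := by
        ext j
        simp only [mem_sdiff, mem_filter, mem_univ, true_and, mem_compl, mem_insert, not_or]
        exact ⟨fun h => ⟨h.1.ne, h.2⟩, fun h => ⟨lt_of_le_of_ne (hmax j h.2) h.1, h.2⟩⟩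
      rw [this, Finset.card_compl, Finset.card_insert_of_notMem hm, Fintype.card_fin]
      omega
    rw [hc] at h
    rw [← h, ← Finset.filter_filter, ← Finset.filter_filter,
      Finset.sum_filter (fun π => Even (inversions π)),
      Finset.sum_filter (fun π => ¬ Even (inversions π)), ← Finset.sum_sub_distrib]
    refine Finset.sum_congr rfl fun π _ => ?_
    rw [Finset.prod_const]
    by_cases he : Even (inversions π)
    · simp [he, he.neg_one_pow]
    · simp [he, (Nat.not_even_iff_odd.1 he).neg_one_pow]
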